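/- Let k be a field, X a k-vector space, and L a set of linear subspaces of X that is closed under sum and intersection (a lattice of subspaces). Suppose X = ⊕_{i∈I} X_i is an internal direct sum decomposition of X into subspaces such that every u ∈ L satisfies u = ⊕_{i∈I} (u ∩ X_i). Then L is distributive (i.e., u ∩ (v + w) = (u ∩ v) + (u ∩ w) for all u, v, w ∈ L) if and only if for every i ∈ I the lattice L ∩ X_i := { u ∩ X_i | u ∈ L } of subspaces of X_i is distributive (i.e., (u ∩ X_i) ∩ ((v ∩ X_i) + (w ∩ X_i)) = ((u ∩ v) ∩ X_i) + ((u ∩ w) ∩ X_i) for all u, v, w ∈ L). -/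

import Mathlib

/-!
Let `x` be an independent family in a complete modular lattice. An element `u = ⨆ i, u ⊓ x i` is
determined by its components `u ⊓ x i`. Taking components commutes with `⊓` trivially, and with `⊔`
of such elements by independence and modularity. So a distributive identity between them holds
exactly when it holds in each component.
-/

section SplitBy

variable {α ι : Type*} [CompleteLattice α] {x : ι → α} {u v w : α}

/-- `u` is split by the family `x` if it is the join of its components `u ⊓ x i`. For subspaces and
an independent family `x`, this is the decomposition `u = ⨁ i, u ∩ x i`; independence is not part
of the definition. -/
def IsSplitBy (x : ι → α) (u : α) : Prop :=
  u = ⨆ i, u ⊓ x i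

theorem IsSplitBy.sup (hv : IsSplitBy x v) (hw : IsSplitBy x w) : IsSplitBy x (v ⊔ w) := by
  refine le_antisymm (sup_le ?_ ?_) (iSup_le fun _ ↦ inf_le_left)
  · exact hv.le.trans (iSup_mono fun i ↦ inf_le_inf_right (x i) le_sup_left)
  · exact hw.le.trans (iSup_mono fun i ↦ inf_le_inf_right (x i) le_sup_right)

theorem IsSplitBy.eq_iff_forall_inf_eq (hu : IsSplitBy x u) (hv : IsSplitBy x v) :
    u = v ↔ ∀ i, u ⊓ x i = v ⊓ x i := by
  refine ⟨fun h i ↦ h ▸ rfl, fun h ↦ ?_⟩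
  calc
    u = ⨆ i, u ⊓ x i := hu
    _ = ⨆ i, v ⊓ x i := iSup_congr h
    _ = v := hv.symm

variable [IsModularLattice α]

theorem iSup_inf_eq_of_iSupIndep_of_le {a : ι → α} (hx : iSupIndep x) (ha : ∀ i, a i ≤ x i)
    (i : ι) : (⨆ j, a j) ⊓ x i = a i := by
  refine le_antisymm ?_ (le_inf (le_iSup a i) (ha i))
  calc
    (⨆ j, a j) ⊓ x i = (a i ⊔ ⨆ (j) (_ : j ≠ i), a j) ⊓ x i := by rw [← iSup_split_single a i]
    _ ≤ (a i ⊔ ⨆ (j) (_ : j ≠ i), x j) ⊓ x i :=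
      inf_le_inf_right _ (sup_le_sup_left (iSup₂_mono fun j _ ↦ ha j) _)
    _ = a i ⊔ (⨆ (j) (_ : j ≠ i), x j) ⊓ x i := sup_inf_assoc_of_le _ (ha i)
    _ = a i := by rw [(hx i).symm.eq_bot, sup_bot_eq]

theorem IsSplitBy.sup_inf_eq (hx : iSupIndep x) (hv : IsSplitBy x v) (hw : IsSplitBy x w) (i : ι) :
    (v ⊔ w) ⊓ x i = v ⊓ x i ⊔ w ⊓ x i := by
  have sup_eq : v ⊔ w = ⨆ j, v ⊓ x j ⊔ w ⊓ x j := by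
    rw [iSup_sup_eq, ← hv, ← hw]
  rw [sup_eq]
  exact iSup_inf_eq_of_iSupIndep_of_le hx (fun j ↦ sup_le inf_le_right inf_le_right) i

theorem inf_sup_eq_iff_forall_inf_of_isSplitBy (hx : iSupIndep x) (hv : IsSplitBy x v)
    (hw : IsSplitBy x w) (huv : IsSplitBy x (u ⊓ v)) (huw : IsSplitBy x (u ⊓ w))
    (huvw : IsSplitBy x (u ⊓ (v ⊔ w))) :
    u ⊓ (v ⊔ w) = u ⊓ v ⊔ u ⊓ w ↔
      ∀ i, (u ⊓ x i) ⊓ (v ⊓ x i ⊔ w ⊓ x i) = (u ⊓ v) ⊓ x i ⊔ (u ⊓ w) ⊓ x i := by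
  rw [huvw.eq_iff_forall_inf_eq (huv.sup huw)]
  refine forall_congr' fun i ↦ ?_
  rw [huv.sup_inf_eq hx huw, ← hv.sup_inf_eq hx hw, ← inf_inf_distrib_right]

theorem lattice_distributive_iff_components_general (L : Sublattice α) (hx : iSupIndep x)
    (hL : ∀ u ∈ L, IsSplitBy x u) :
    (∀ u ∈ L, ∀ v ∈ L, ∀ w ∈ L, u ⊓ (v ⊔ w) = u ⊓ v ⊔ u ⊓ w) ↔
      ∀ i, ∀ u ∈ L, ∀ v ∈ L, ∀ w ∈ L,
        (u ⊓ x i) ⊓ (v ⊓ x i ⊔ w ⊓ x i) = (u ⊓ v) ⊓ x i ⊔ (u ⊓ w) ⊓ x i := by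
  have componentwise : ∀ u ∈ L, ∀ v ∈ L, ∀ w ∈ L,
      (u ⊓ (v ⊔ w) = u ⊓ v ⊔ u ⊓ w ↔
        ∀ i, (u ⊓ x i) ⊓ (v ⊓ x i ⊔ w ⊓ x i) = (u ⊓ v) ⊓ x i ⊔ (u ⊓ w) ⊓ x i) :=
    fun u hu v hv w hw ↦
      inf_sup_eq_iff_forall_inf_of_isSplitBy hx (hL v hv) (hL w hw)
        (hL _ (L.inf_mem hu hv)) (hL _ (L.inf_mem hu hw)) (hL _ (L.inf_mem hu (L.sup_mem hv hw)))
  exact ⟨fun h i u hu v hv w hw ↦ (componentwise u hu v hv w hw).mp (h u hu v hv w hw) i,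
    fun h u hu v hv w hw ↦ (componentwise u hu v hv w hw).mpr fun i ↦ h i u hu v hv w hw⟩

end SplitBy

/-- Let `L` be a lattice of subspaces of a vector space `X`
(closed under sum and intersection).  Suppose `X = ⨁_{i ∈ I} X i` is an internal
direct sum decomposition such that every `u ∈ L` satisfies `u = ⨁ i, u ⊓ X i`.
Then `L` is distributive iff for every `i` the lattice `L ∩ X i` is distributive. -/
theorem lattice_distributive_iff_components
    (k : Type*) [Field k] (X : Type*) [AddCommGroup X] [Module k X]
    (L : Set (Submodule k X))
    (hLsup : ∀ u ∈ L, ∀ v ∈ L, u ⊔ v ∈ L)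
    (hLinf : ∀ u ∈ L, ∀ v ∈ L, u ⊓ v ∈ L)
    (I : Type*) (Xi : I → Submodule k X)
    (hIndep : iSupIndep Xi)
    (hTop : (⨆ i, Xi i) = ⊤)
    (hDecomp : ∀ u ∈ L, u = ⨆ i, u ⊓ Xi i) :
    (∀ u ∈ L, ∀ v ∈ L, ∀ w ∈ L, u ⊓ (v ⊔ w) = (u ⊓ v) ⊔ (u ⊓ w)) ↔
      (∀ i, ∀ u ∈ L, ∀ v ∈ L, ∀ w ∈ L,
        (u ⊓ Xi i) ⊓ ((v ⊓ Xi i) ⊔ (w ⊓ Xi i)) =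
          ((u ⊓ v) ⊓ Xi i) ⊔ ((u ⊓ w) ⊓ Xi i)) :=
  lattice_distributive_iff_components_general
    ⟨L, fun u hu v hv ↦ hLsup u hu v hv, fun u hu v hv ↦ hLinf u hu v hv⟩ hIndep hDecomp
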